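/- arXiv:2605.07322 — 3 statements merged into one kernel-verified Lean document; each statement's English description precedes it below -/
import Mathlib

section
/- Let s' ≤ t' be integers with s' even and s' ≥ 2, and let ε > 0. There exists n_0 such that for all n ≥ n_0 the following holds: if there is an edge-coloring of the complete graph K_n with r colors under which no copy of K_{s',t'} is strongly-even-chromatic, then r ≥ (1 − ε)·(n/t')^{2/s'}. -/
/-!
Fix a vertex `u` and colour every other vertex `v` by the colour of `uv`. By Cauchy–Schwarz, every
`q`-set of vertices contains at least `q (q - r) / r` ordered pairs of distinct vertices of equal
colour. Adjoining such pairs greedily produces many `2k`-sets in which every colour occurs an even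
number of times, about `(n ^ 2 / r) ^ k / (2k)!` of them. If there is no strongly-even-chromatic
`K_{2k,t}`, each `2k`-set arises in this way from fewer than `t` vertices `u`, and comparing the
two counts gives `n ≤ t * r ^ k + 4 * k ^ 2`.
-/

open Finset

section Inequalities

lemma descFactorial_le_mul_pow (n : ℕ) {s : ℕ} (hs : s ≠ 0) :
    n.descFactorial s ≤ n * (n - 1) ^ (s - 1) := by
  obtain ⟨j, rfl⟩ := Nat.exists_eq_succ_of_ne_zero hs
  cases n with
  | zero => simp
  | succ m =>
    rw [Nat.succ_descFactorial_succ]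
    exact Nat.mul_le_mul_left _ (Nat.descFactorial_le_pow _ _)

lemma pow_le_sub_pow_add (x y k : ℕ) : x ^ k ≤ (x - y) ^ k + k * y * x ^ (k - 1) := by
  have habs := abs_pow_sub_pow_le (x : ℤ) ((x - y : ℕ) : ℤ) k
  rw [Nat.abs_cast, Nat.abs_cast, max_eq_left (by omega)] at habs
  have hsub : |(x : ℤ) - (x - y : ℕ)| ≤ y := abs_le.2 ⟨by omega, by omega⟩
  zify
  calc (x : ℤ) ^ k = ((x - y : ℕ) : ℤ) ^ k + (x ^ k - ((x - y : ℕ) : ℤ) ^ k) := by ring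
    _ ≤ ((x - y : ℕ) : ℤ) ^ k + |(x : ℤ) - (x - y : ℕ)| * k * x ^ (k - 1) := by
        gcongr
        exact (le_abs_self _).trans habs
    _ ≤ ((x - y : ℕ) : ℤ) ^ k + y * k * x ^ (k - 1) := by gcongr
    _ = _ := by rw [mul_comm (y : ℤ)]

lemma mul_le_pow_add (k r : ℕ) : k * r ≤ r ^ k + k := by
  have := one_add_mul_sub_le_pow (a := (r : ℤ)) (by omega) k
  zify
  linarith

lemma pow_two_mul_le (q r k : ℕ) :
    q ^ (2 * k) ≤ (q * (q - r)) ^ k + (r ^ k + k) * q ^ (2 * k - 1) := by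
  rcases k.eq_zero_or_pos with rfl | _
  · simp
  calc q ^ (2 * k) = q ^ k * q ^ k := by rw [two_mul, pow_add]
    _ ≤ q ^ k * ((q - r) ^ k + k * r * q ^ (k - 1)) := by
        gcongr
        exact pow_le_sub_pow_add q r k
    _ = (q * (q - r)) ^ k + k * r * q ^ (2 * k - 1) := by
        rw [show 2 * k - 1 = k + (k - 1) by omega, pow_add]
        ring
    _ ≤ _ := by
        gcongr
        exact mul_le_pow_add k r

lemma mul_rpow_inv_natCast_le {k : ℕ} (hk : k ≠ 0) {a x y : ℝ} (ha : a ≤ 1) (hx : 0 ≤ x)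
    (hy : 0 ≤ y) (h : a * x ≤ y ^ k) : a * x ^ (k : ℝ)⁻¹ ≤ y := by
  rcases le_total a 0 with ha0 | ha0
  · exact (mul_nonpos_of_nonpos_of_nonneg ha0 (by positivity)).trans hy
  refine le_of_pow_le_pow_left₀ hk hy ?_
  calc (a * x ^ (k : ℝ)⁻¹) ^ k = a ^ k * x := by rw [mul_pow, Real.rpow_inv_natCast_pow hx hk]
    _ ≤ a * x := by gcongr; exact pow_le_of_le_one ha0 ha hk
    _ ≤ y ^ k := h

end Inequalities

section EvenSubsets

variable {V C : Type*} [Fintype C] [DecidableEq C]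

/-- The `n`-element subsets of `S` in which every colour class of the vertex colouring `f` has even
size. For `f = χ u`, these are the possible first parts of a strongly-even-chromatic copy whose
second part contains `u`. -/
def evenSubsets (f : V → C) (S : Finset V) (n : ℕ) : Finset (Finset V) :=
  {A ∈ S.powersetCard n | ∀ c, Even #{v ∈ A | f v = c}}

lemma mem_evenSubsets {f : V → C} {S A : Finset V} {n : ℕ} :
    A ∈ evenSubsets f S n ↔ (A ⊆ S ∧ #A = n) ∧ ∀ c, Even #{v ∈ A | f v = c} := by
  rw [evenSubsets, mem_filter, mem_powersetCard]

lemma card_filter_product_eq_sum_sq (f : V → C) (S : Finset V) :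
    #{p ∈ S ×ˢ S | f p.1 = f p.2} = ∑ c, #{v ∈ S | f v = c} ^ 2 := by
  rw [card_eq_sum_card_fiberwise (f := fun p => f p.1) (t := univ) fun _ _ => mem_univ _]
  refine sum_congr rfl fun c _ => ?_
  rw [sq, ← card_product]
  congr 1
  ext ⟨a, b⟩
  simp only [mem_filter, mem_product]
  grind

lemma insert_insert_mem_evenSubsets [DecidableEq V] {f : V → C} {S A : Finset V} {n : ℕ}
    (hA : A ∈ evenSubsets f S n) {a b : V} (ha : a ∈ S \ A) (hb : b ∈ S \ A) (hab : a ≠ b)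
    (hf : f a = f b) : insert a (insert b A) ∈ evenSubsets f S (n + 2) := by
  obtain ⟨⟨hAS, hAn⟩, heven⟩ := mem_evenSubsets.1 hA
  obtain ⟨haS, haA⟩ := mem_sdiff.1 ha
  obtain ⟨hbS, hbA⟩ := mem_sdiff.1 hb
  have haA' : a ∉ insert b A := by simp [hab, haA]
  refine mem_evenSubsets.2 ⟨⟨?_, ?_⟩, fun c => ?_⟩
  · exact insert_subset haS (insert_subset hbS hAS)
  · rw [card_insert_of_notMem haA', card_insert_of_notMem hbA, hAn]
  · by_cases hc : f b = c
    · rw [filter_insert, if_pos (hf.trans hc), filter_insert, if_pos hc,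
        card_insert_of_notMem (by simp [hab, haA]), card_insert_of_notMem (by simp [hbA])]
      exact (heven c).add even_two
    · rw [filter_insert, if_neg (hf ▸ hc), filter_insert, if_neg hc]
      exact heven c

lemma sq_card_le_mul_card_monochromatic_offDiag_add (f : V → C) (S : Finset V) :
    #S ^ 2 ≤ Fintype.card C * (#{p ∈ S.offDiag | f p.1 = f p.2} + #S) := by
  classical
  have hsplit : #{p ∈ S ×ˢ S | f p.1 = f p.2} = #{p ∈ S.offDiag | f p.1 = f p.2} + #S := by
    rw [← diag_union_offDiag, filter_union, card_union_of_disjoint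
      (disjoint_filter_filter (disjoint_diag_offDiag S)), filter_true_of_mem, diag_card, add_comm]
    rintro p hp
    rw [(mem_diag.1 hp).2]
  calc #S ^ 2 = (∑ c, #{v ∈ S | f v = c}) ^ 2 := by
        rw [← card_eq_sum_card_fiberwise fun _ _ => mem_univ _]
    _ ≤ Fintype.card C * ∑ c, #{v ∈ S | f v = c} ^ 2 := sq_sum_le_card_mul_sum_sq
    _ = _ := by rw [← card_filter_product_eq_sum_sq, hsplit]

lemma mul_sub_le_mul_card_monochromatic_offDiag (f : V → C) {S : Finset V} {q : ℕ} (hq : q ≤ #S) :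
    q * (q - Fintype.card C) ≤ Fintype.card C * #{p ∈ S.offDiag | f p.1 = f p.2} := by
  calc q * (q - Fintype.card C) ≤ #S * (#S - Fintype.card C) := by gcongr
    _ = #S ^ 2 - Fintype.card C * #S := by rw [Nat.mul_sub, sq, mul_comm #S (Fintype.card C)]
    _ ≤ _ := by
      rw [Nat.sub_le_iff_le_add, ← mul_add]
      exact sq_card_le_mul_card_monochromatic_offDiag_add f S

/- The pair `(A, (a, b))` is recovered from `A ∪ {a, b}` together with `(a, b)`, an ordered pair of
distinct elements of that set. -/
lemma sum_card_monochromatic_offDiag_sdiff_le [DecidableEq V] (f : V → C) (S : Finset V) (n : ℕ) :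
    ∑ A ∈ evenSubsets f S n, #{p ∈ (S \ A).offDiag | f p.1 = f p.2} ≤
      (n + 2) * (n + 1) * #(evenSubsets f S (n + 2)) := by
  have hoffDiag : ∀ A ∈ evenSubsets f S (n + 2), #A.offDiag = (n + 2) * (n + 1) := by
    intro A hA
    rw [offDiag_card, (mem_evenSubsets.1 hA).1.2, ← Nat.mul_sub_one, Nat.add_succ_sub_one]
  rw [mul_comm, ← smul_eq_mul (#_), ← sum_const, ← sum_congr rfl hoffDiag, ← card_sigma,
    ← card_sigma]
  refine card_le_card_of_injOn (fun x => ⟨insert x.2.1 (insert x.2.2 x.1), x.2⟩) ?_ ?_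
  · rintro ⟨A, a, b⟩ hx
    simp only [coe_sigma, Set.mem_sigma_iff, mem_coe, mem_filter, mem_offDiag] at hx ⊢
    obtain ⟨hA, ⟨ha, hb, hab⟩, hf⟩ := hx
    exact ⟨insert_insert_mem_evenSubsets hA ha hb hab hf, by simp [hab]⟩
  · rintro ⟨A, a, b⟩ hx ⟨A', a', b'⟩ hx' heq
    simp only [coe_sigma, Set.mem_sigma_iff, mem_coe, mem_filter, mem_offDiag, mem_sdiff]
      at hx hx'
    simp only [Sigma.mk.injEq, heq_eq_eq, Prod.mk.injEq] at heq ⊢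
    obtain ⟨hins, rfl, rfl⟩ := heq
    refine ⟨?_, rfl, rfl⟩
    ext v
    have := congrArg (v ∈ ·) hins
    grind

lemma card_evenSubsets_mul_le (f : V → C) {S : Finset V} {n q : ℕ} (hq : q + n ≤ #S) :
    #(evenSubsets f S n) * (q * (q - Fintype.card C)) ≤
      Fintype.card C * ((n + 2) * (n + 1) * #(evenSubsets f S (n + 2))) := by
  classical
  calc #(evenSubsets f S n) * (q * (q - Fintype.card C))
      ≤ ∑ A ∈ evenSubsets f S n,
          Fintype.card C * #{p ∈ (S \ A).offDiag | f p.1 = f p.2} := by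
        rw [← smul_eq_mul]
        refine card_nsmul_le_sum _ _ _ fun A hA => ?_
        obtain ⟨⟨hAS, hAn⟩, -⟩ := mem_evenSubsets.1 hA
        refine mul_sub_le_mul_card_monochromatic_offDiag f ?_
        rw [card_sdiff_of_subset hAS]
        omega
    _ ≤ _ := by
        rw [← mul_sum]
        gcongr
        exact sum_card_monochromatic_offDiag_sdiff_le f S n

lemma pow_le_factorial_mul_card_evenSubsets (f : V → C) {S : Finset V} {q : ℕ} (k : ℕ)
    (hq : q + 2 * k ≤ #S + 2) :
    (q * (q - Fintype.card C)) ^ k ≤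
      Fintype.card C ^ k * ((2 * k).factorial * #(evenSubsets f S (2 * k))) := by
  induction k with
  | zero =>
    have : evenSubsets f S 0 = {∅} := by simp [evenSubsets]
    simp [this]
  | succ k ih =>
    calc (q * (q - Fintype.card C)) ^ (k + 1)
        ≤ Fintype.card C ^ k * ((2 * k).factorial * #(evenSubsets f S (2 * k))) *
            (q * (q - Fintype.card C)) := by
          rw [pow_succ]
          exact Nat.mul_le_mul_right _ (ih (by omega))
      _ = Fintype.card C ^ k * (2 * k).factorial *
            (#(evenSubsets f S (2 * k)) * (q * (q - Fintype.card C))) := by ring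
      _ ≤ Fintype.card C ^ k * (2 * k).factorial * (Fintype.card C *
            ((2 * k + 2) * (2 * k + 1) * #(evenSubsets f S (2 * k + 2)))) :=
          Nat.mul_le_mul_left _ (card_evenSubsets_mul_le f (by omega))
      _ = _ := by
          rw [mul_add_one 2 k, Nat.factorial_succ, Nat.factorial_succ]
          ring

end EvenSubsets

section StronglyEvenChromatic

variable {V C : Type*} [Fintype V] [Fintype C] [DecidableEq C]

/-- There is a strongly-even-chromatic copy of `K_{s,t}`, with parts `A` and `B`, under the
colouring `χ`. The edge from `u ∈ B` to `v ∈ A` has colour `χ u v`, and `χ` may be asymmetric. -/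
def HasStronglyEvenChromaticCopy (χ : V → V → C) (s t : ℕ) : Prop :=
  ∃ A B : Finset V, Disjoint A B ∧ #A = s ∧ #B = t ∧ ∀ u ∈ B, ∀ c, Even #{v ∈ A | χ u v = c}

lemma sum_card_evenSubsets_le [DecidableEq V] {χ : V → V → C} {s t : ℕ}
    (hχ : ¬ HasStronglyEvenChromaticCopy χ s t) :
    ∑ u, #(evenSubsets (χ u) (univ.erase u) s) ≤ (t - 1) * (Fintype.card V).choose s := by
  have habove (u : V) : evenSubsets (χ u) (univ.erase u) s =
      (univ.powersetCard s).bipartiteAbove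
        (fun u A => u ∉ A ∧ ∀ c, Even #{v ∈ A | χ u v = c}) u := by
    ext A
    simp [mem_evenSubsets, mem_bipartiteAbove, subset_erase, and_assoc, and_left_comm]
  simp_rw [habove]
  rw [sum_card_bipartiteAbove_eq_sum_card_bipartiteBelow, mul_comm, ← card_univ,
    ← card_powersetCard, ← smul_eq_mul]
  refine sum_le_card_nsmul _ _ _ fun A hA => Nat.le_sub_one_of_lt ?_
  by_contra! ht
  obtain ⟨B, hB, hBt⟩ := exists_subset_card_eq ht
  have hBA : ∀ u ∈ B, u ∉ A ∧ ∀ c, Even #{v ∈ A | χ u v = c} := fun u hu =>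
    ((mem_bipartiteBelow _).1 (hB hu)).2
  exact hχ ⟨A, B, disjoint_right.2 fun u hu => (hBA u hu).1, (mem_powersetCard.1 hA).2, hBt,
    fun u hu => (hBA u hu).2⟩

lemma pow_le_of_not_hasStronglyEvenChromaticCopy {χ : V → V → C} {k t q : ℕ}
    (hk : k ≠ 0) (hq : q + 2 * k ≤ Fintype.card V + 1)
    (hχ : ¬ HasStronglyEvenChromaticCopy χ (2 * k) t) :
    (q * (q - Fintype.card C)) ^ k ≤
      (t - 1) * Fintype.card C ^ k * (Fintype.card V - 1) ^ (2 * k - 1) := by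
  classical
  set n := Fintype.card V
  set r := Fintype.card C
  have hn : 0 < n := by omega
  have hcard (u : V) : q + 2 * k ≤ #(univ.erase u) + 2 := by
    rw [card_erase_of_mem (mem_univ u), card_univ]
    omega
  refine Nat.le_of_mul_le_mul_left ?_ hn
  calc n * (q * (q - r)) ^ k
      ≤ ∑ u, r ^ k * ((2 * k).factorial * #(evenSubsets (χ u) (univ.erase u) (2 * k))) := by
        rw [← smul_eq_mul]
        exact card_nsmul_le_sum _ _ _ fun u _ =>
          pow_le_factorial_mul_card_evenSubsets (χ u) k (hcard u)
    _ ≤ r ^ k * ((2 * k).factorial * ((t - 1) * n.choose (2 * k))) := by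
        rw [← mul_sum, ← mul_sum]
        gcongr
        exact sum_card_evenSubsets_le hχ
    _ = (t - 1) * r ^ k * n.descFactorial (2 * k) := by
        rw [Nat.descFactorial_eq_factorial_mul_choose]
        ring
    _ ≤ (t - 1) * r ^ k * (n * (n - 1) ^ (2 * k - 1)) := by
        gcongr
        exact descFactorial_le_mul_pow n (by omega)
    _ = _ := by ring

/- In `pow_two_mul_le`, replacing `q - r` by `q` costs, to leading order, one extra summand `r ^ k`:
this turns the factor `t - 1` of the double count into `t`. -/
theorem card_le_of_not_hasStronglyEvenChromaticCopy {χ : V → V → C} {k t : ℕ} (hk : k ≠ 0)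
    (ht : 0 < t) (hχ : ¬ HasStronglyEvenChromaticCopy χ (2 * k) t) :
    Fintype.card V ≤ t * Fintype.card C ^ k + 4 * k ^ 2 := by
  have hloss : 2 * k * (2 * k - 2) + k + 1 ≤ 4 * k ^ 2 := by
    obtain ⟨j, rfl⟩ := Nat.exists_eq_add_one_of_ne_zero hk
    rw [show 2 * (j + 1) - 2 = 2 * j by omega]
    nlinarith
  rcases le_or_gt (Fintype.card V) (2 * k) with hsmall | hlarge
  · exact hsmall.trans (le_add_left (by nlinarith [Nat.pos_of_ne_zero hk]))
  obtain ⟨m, hm⟩ : ∃ m, Fintype.card V = m + 1 := Nat.exists_eq_add_one_of_ne_zero (by omega)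
  set r := Fintype.card C
  have hcount := pow_le_of_not_hasStronglyEvenChromaticCopy (q := m - (2 * k - 2)) hk (by omega) hχ
  rw [hm, Nat.add_sub_cancel] at hcount
  have hbound : m * m ^ (2 * k - 1) ≤
      (t * r ^ k + k + 2 * k * (2 * k - 2)) * m ^ (2 * k - 1) := by
    calc m * m ^ (2 * k - 1) = m ^ (2 * k) := mul_pow_sub_one (by omega) m
      _ ≤ (m - (2 * k - 2)) ^ (2 * k) + 2 * k * (2 * k - 2) * m ^ (2 * k - 1) :=
          pow_le_sub_pow_add m (2 * k - 2) (2 * k)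
      _ ≤ (t - 1) * r ^ k * m ^ (2 * k - 1) + (r ^ k + k) * m ^ (2 * k - 1) +
            2 * k * (2 * k - 2) * m ^ (2 * k - 1) := by
          gcongr
          refine (pow_two_mul_le (m - (2 * k - 2)) r k).trans (add_le_add hcount ?_)
          gcongr
          exact Nat.sub_le _ _
      _ = ((t - 1 + 1) * r ^ k + k + 2 * k * (2 * k - 2)) * m ^ (2 * k - 1) := by ring
      _ = _ := by rw [Nat.sub_add_cancel ht]
  have hmpos : 0 < m := by omega
  have := Nat.le_of_mul_le_mul_right hbound (by positivity)
  omega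

end StronglyEvenChromatic

theorem strongly_even_chromatic_lower_general (s t : ℕ) (hs : 2 ≤ s) (he : Even s) (ht : 0 < t)
    (ε : ℝ) (hε : 0 < ε) :
    ∃ n₀ : ℕ, ∀ (V C : Type*) [Fintype V] [Fintype C] [DecidableEq C]
      (χ : V → V → C), n₀ ≤ Fintype.card V → ¬ HasStronglyEvenChromaticCopy χ s t →
      (1 - ε) * ((Fintype.card V : ℝ) / t) ^ (2 / (s : ℝ)) ≤ Fintype.card C := by
  obtain ⟨k, rfl⟩ := even_iff_exists_two_mul.1 he
  have hk : k ≠ 0 := by omega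
  refine ⟨⌈4 * k ^ 2 / ε⌉₊, fun V C _ _ _ χ hV hχ => ?_⟩
  set n := Fintype.card V
  set r := Fintype.card C
  have hn : 4 * k ^ 2 ≤ n * ε := (div_le_iff₀ hε).1 (Nat.ceil_le.1 hV)
  have hcard : (n : ℝ) ≤ t * r ^ k + 4 * k ^ 2 := by
    exact_mod_cast card_le_of_not_hasStronglyEvenChromaticCopy hk ht hχ
  have hexp : 2 / ((2 * k : ℕ) : ℝ) = (k : ℝ)⁻¹ := by
    push_cast
    field_simp
  rw [hexp]
  refine mul_rpow_inv_natCast_le hk (by linarith) (by positivity) (by positivity) ?_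
  rw [← mul_div_assoc, div_le_iff₀ (by exact_mod_cast ht)]
  linarith

/-- **Lemma (Boyadzhiyska–Das–Lesgourgues–Petrova).** Let `s' ≤ t'` with `s'`
even, `s' ≥ 2`, and let `ε > 0`. For all sufficiently large `n`: if some
`r`-coloring of the edges of `K_n` admits no strongly-even-chromatic copy of
`K_{s',t'}` (a copy with parts `A`, `B` such that for every `u ∈ B` each color
occurs an even number of times among the edges from `u` to `A`), then
`r ≥ (1 - ε) (n/t') ^ (2/s')`. -/
theorem strongly_even_chromatic_lower (s' t' : ℕ) (hs : 2 ≤ s') (he : Even s')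
    (hst : s' ≤ t') (ε : ℝ) (hε : 0 < ε) :
    ∃ n₀ : ℕ, ∀ n ≥ n₀, ∀ r : ℕ,
      (∃ χ : Sym2 (Fin n) → Fin r,
        ¬ ∃ (A B : Finset (Fin n)), Disjoint A B ∧ A.card = s' ∧ B.card = t' ∧
          ∀ u ∈ B, ∀ c : Fin r, Even ((A.filter (fun v => χ s(u, v) = c)).card)) →
      (1 - ε) * ((n : ℝ) / (t' : ℝ)) ^ (2 / (s' : ℝ)) ≤ (r : ℝ) := by
  obtain ⟨n₀, h⟩ := strongly_even_chromatic_lower_general s' t' hs he (by omega) ε hε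
  exact ⟨n₀, fun n hn r ⟨χ, hχ⟩ => by
    simpa using h (Fin n) (Fin r) (fun u v => χ s(u, v)) (by simpa using hn) hχ⟩
end

section
/- Let n ≥ 3 be an even integer and let G be an n-vertex graph with minimum degree δ(G) ≥ n/2. Suppose exactly n/2 vertices of G have degree at least n/2 + 1, and suppose there exists a pair of vertices u, v ∈ V(G) admitting no Hamilton {u,v}-path. Then the set V_1 = { v ∈ V(G) : deg(v) = n/2 } is an independent set, and for every pair of distinct vertices x, y ∈ V_1 there is a Hamilton path in G with endpoints x and y. -/
/-!
If `deg x + deg y > |V|`, a Hamilton path through the edge `xy` can be rerouted around it by a Pósa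
rotation, so adding such an edge creates no new pair of ends of a Hamilton path. Adding all of them
(the Bondy–Chvátal closure) makes every vertex of degree above `|V| / 2` universal, because the
minimum degree is at least `|V| / 2`. Let `B` be a set of universal vertices with `|B| ≥ |V| / 2`.
Any two vertices outside `B` are the ends of a Hamilton path that uses vertices of `B` to separate
the other ones. If moreover two vertices outside `B` are adjacent, each of them is universal too,
so all degrees exceed `|V| / 2` and the closure is complete.
-/

open Finset SimpleGraph

variable {V : Type*}

section Rotation

variable {G : SimpleGraph V} {u v x y : V}

theorem exists_dart_of_support_length_lt (P : G.Walk u x) (p q : V → Prop) [DecidablePred p]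
    [DecidablePred q] (hx : ¬ p x)
    (hlt : P.support.length < P.support.countP p + P.support.countP q) :
    ∃ e ∈ P.darts, p e.fst ∧ q e.snd := by
  by_contra! hdisj
  have hp : P.support.countP p = P.darts.countP (p ·.fst) := by
    rw [← P.map_fst_darts_append, List.countP_append, List.countP_map]
    simp [hx, Function.comp_def]
  have hq : P.support.countP q ≤ P.darts.countP (q ·.snd) + 1 := by
    rw [← P.cons_map_snd_darts, List.countP_cons, List.countP_map]
    simp only [Function.comp_def]
    split_ifs <;> omega
  have hpq : P.darts.countP (q ·.snd) ≤ P.darts.countP (¬ p ·.fst) :=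
    List.countP_mono_left fun e he hqe => by
      simp only [decide_eq_true_eq] at hqe ⊢
      exact fun hpe => hdisj e he hpe hqe
  have hlen := List.length_eq_countP_add_countP (fun e : G.Dart => decide (p e.fst)) (l := P.darts)
  simp only [decide_eq_true_eq, Walk.length_darts] at hlen
  rw [Walk.length_support] at hlt
  omega

variable [DecidableEq V]

/-- The walks `P` and `Q` together visit every vertex exactly once: a Hamilton path from which
one edge, not necessarily an edge of `G`, has been removed. -/
def IsSpanningPair (P : G.Walk u x) (Q : G.Walk y v) : Prop :=
  ∀ w, (P.support ++ Q.support).count w = 1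

namespace IsSpanningPair

variable {P : G.Walk u x} {Q : G.Walk y v}

theorem reverse (h : IsSpanningPair P Q) : IsSpanningPair Q.reverse P.reverse := by
  intro w
  simpa [List.count_append, add_comm] using h w

/-- Pósa rotation: with `e = cd`, the new path is `u … c x … d y … v`. -/
theorem exists_isHamiltonian_of_mem_darts (h : IsSpanningPair P Q) {e : G.Dart}
    (he : e ∈ P.darts) (hx : G.Adj x e.fst) (hy : G.Adj y e.snd) :
    ∃ p : G.Walk u v, p.IsHamiltonian := by
  obtain ⟨P₁, P₂, rfl⟩ := P.isSubwalk_toWalk_adj_iff_mem_darts.2 he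
  refine ⟨P₁.append (.cons hx.symm (P₂.reverse.append (.cons hy.symm Q))), fun w => ?_⟩
  simpa [Walk.support_append, List.count_append, add_assoc] using h w

theorem perm_toList_univ [Fintype V] (h : IsSpanningPair P Q) :
    (P.support ++ Q.support).Perm (univ : Finset V).toList := by
  refine List.perm_iff_count.2 fun w => ?_
  rw [h w, List.count_eq_one_of_mem (nodup_toList _) (by simp)]

theorem countP_support_add_countP_support [Fintype V] [DecidableRel G.Adj]
    (h : IsSpanningPair P Q) (w : V) :
    P.support.countP (G.Adj w) + Q.support.countP (G.Adj w) = G.degree w := by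
  rw [← List.countP_append, h.perm_toList_univ.countP_eq, ← card_neighborFinset_eq_degree,
    neighborFinset_eq_filter, card_def, filter_val, ← Multiset.countP_eq_card_filter, ← coe_toList,
    Multiset.coe_countP]

theorem length_support_add_length_support [Fintype V] (h : IsSpanningPair P Q) :
    P.support.length + Q.support.length = Fintype.card V := by
  rw [← List.length_append, h.perm_toList_univ.length_eq, length_toList, card_univ]

theorem exists_isHamiltonian [Fintype V] [DecidableRel G.Adj] (h : IsSpanningPair P Q)
    (hdeg : Fintype.card V < G.degree x + G.degree y) :
    ∃ p : G.Walk u v, p.IsHamiltonian := by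
  rw [← h.countP_support_add_countP_support x, ← h.countP_support_add_countP_support y,
    ← h.length_support_add_length_support] at hdeg
  by_cases hP : P.support.length < P.support.countP (G.Adj x) + P.support.countP (G.Adj y)
  · obtain ⟨e, he, hxe, hye⟩ := exists_dart_of_support_length_lt P _ _ G.irrefl hP
    exact h.exists_isHamiltonian_of_mem_darts he hxe hye
  · have hQ : Q.reverse.support.length <
        Q.reverse.support.countP (G.Adj y) + Q.reverse.support.countP (G.Adj x) := by
      simp only [Walk.support_reverse, List.length_reverse, List.countP_reverse]
      omega
    obtain ⟨e, he, hye, hxe⟩ := exists_dart_of_support_length_lt Q.reverse _ _ G.irrefl hQ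
    obtain ⟨p, hp⟩ := h.reverse.exists_isHamiltonian_of_mem_darts he hye hxe
    exact ⟨p.reverse, fun w => by simpa using hp w⟩

end IsSpanningPair

omit [DecidableEq V] in
theorem mem_edgeSet_of_mem_edges_sup_edge {p : (G ⊔ edge x y).Walk u v} (hxy : s(x, y) ∉ p.edges) :
    ∀ e ∈ p.edges, e ∈ G.edgeSet := by
  intro e he
  have hmem := p.edges_subset_edgeSet he
  rw [edgeSet_sup] at hmem
  refine hmem.resolve_right fun h => hxy ?_
  rwa [← Set.mem_singleton_iff.1 (edgeSet_edge_subset h)]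

theorem exists_isSpanningPair_of_mem_edges {p : (G ⊔ edge x y).Walk u v} (hp : p.IsHamiltonian)
    (hxy : s(x, y) ∈ p.edges) :
    ∃ (a b : V) (P : G.Walk u a) (Q : G.Walk b v), s(a, b) = s(x, y) ∧ IsSpanningPair P Q := by
  obtain ⟨⟨⟨a, b⟩, hab⟩, hd, habxy⟩ := List.mem_map.1 hxy
  obtain ⟨P, Q, rfl⟩ := (p.isSubwalk_toWalk_iff_mem_darts hab).2 hd
  have habxy : s(a, b) = s(x, y) := habxy
  have htrail := hp.isPath.isTrail
  simp only [Walk.isTrail_def, Walk.edges_append, Walk.edges_cons, Walk.edges_nil, habxy] at htrail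
  have hP : s(x, y) ∉ P.edges := by grind
  have hQ : s(x, y) ∉ Q.edges := by grind
  refine ⟨a, b, P.transfer G (mem_edgeSet_of_mem_edges_sup_edge hP),
    Q.transfer G (mem_edgeSet_of_mem_edges_sup_edge hQ), habxy, fun w => ?_⟩
  simpa [Walk.support_append, List.count_append, add_assoc] using hp w

end Rotation

section Closure

variable [Fintype V] [DecidableEq V]

theorem exists_isHamiltonian_of_sup_edge {G : SimpleGraph V} [DecidableRel G.Adj] {u v x y : V}
    (hdeg : Fintype.card V < G.degree x + G.degree y)
    (h : ∃ p : (G ⊔ edge x y).Walk u v, p.IsHamiltonian) :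
    ∃ p : G.Walk u v, p.IsHamiltonian := by
  obtain ⟨p, hp⟩ := h
  by_cases hxy : s(x, y) ∈ p.edges
  · obtain ⟨a, b, P, Q, hab, hPQ⟩ := exists_isSpanningPair_of_mem_edges hp hxy
    refine hPQ.exists_isHamiltonian ?_
    obtain ⟨rfl, rfl⟩ | ⟨rfl, rfl⟩ := Sym2.eq_iff.1 hab
    · exact hdeg
    · rwa [add_comm]
  · exact ⟨p.transfer G (mem_edgeSet_of_mem_edges_sup_edge hxy), fun w => by simpa using hp w⟩

/-- Bondy–Chvátal closedness at threshold `m`: distinct vertices of degree sum at least `m` are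
adjacent. The threshold relevant to Hamilton paths with prescribed ends is `|V| + 1`. -/
def IsDegreeSumClosed (G : SimpleGraph V) [DecidableRel G.Adj] (m : ℕ) : Prop :=
  ∀ ⦃x y⦄, x ≠ y → m ≤ G.degree x + G.degree y → G.Adj x y

theorem exists_isDegreeSumClosed_supergraph (G : SimpleGraph V) :
    ∃ (H : SimpleGraph V) (_ : DecidableRel H.Adj), G ≤ H ∧
      IsDegreeSumClosed H (Fintype.card V + 1) ∧
      ∀ u v, (∃ p : H.Walk u v, p.IsHamiltonian) → ∃ p : G.Walk u v, p.IsHamiltonian := by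
  classical
  obtain ⟨H, hGH, hmax⟩ := Finite.exists_le_maximal
    (p := fun H : SimpleGraph V =>
      ∀ u v, (∃ p : H.Walk u v, p.IsHamiltonian) → ∃ p : G.Walk u v, p.IsHamiltonian)
    (fun _ _ => id)
  refine ⟨H, inferInstance, hGH, fun x y hne hdeg => ?_, hmax.prop⟩
  by_contra hxy
  exact hmax.not_prop_of_gt (lt_sup_edge _ _ _ hne hxy) fun u v h =>
    hmax.prop u v (exists_isHamiltonian_of_sup_edge hdeg h)

end Closure

section Universal

variable {H : SimpleGraph V}

theorem card_le_degree_of_isUniversal [Fintype V] [DecidableRel H.Adj] {B : Finset V}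
    (hB : ∀ b ∈ B, H.IsUniversal b) {w : V} (hw : w ∉ B) : #B ≤ H.degree w := by
  refine card_le_card fun b hb => ?_
  rw [mem_neighborFinset]
  exact (hB b hb (ne_of_mem_of_not_mem hb hw)).symm

namespace IsDegreeSumClosed

variable [Fintype V] [DecidableRel H.Adj] {B : Finset V} {m : ℕ}

theorem isUniversal_of_le {G : SimpleGraph V} [DecidableRel G.Adj] (hH : IsDegreeSumClosed H m)
    (hGH : G ≤ H) (hB : ∀ b ∈ B, ∀ w, b ≠ w → m ≤ G.degree b + G.degree w) :
    ∀ b ∈ B, H.IsUniversal b := fun b hb w hbw =>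
  hH hbw ((hB b hb w hbw).trans (add_le_add (degree_le_of_le hGH) (degree_le_of_le hGH)))

theorem eq_top (hH : IsDegreeSumClosed H m) (hB : ∀ b ∈ B, H.IsUniversal b) (hm : m ≤ 2 * #B) :
    H = ⊤ := by
  refine eq_top_iff.2 fun x y hxy => ?_
  by_cases hx : x ∈ B
  · exact hB x hx hxy
  by_cases hy : y ∈ B
  · exact (hB y hy (Ne.symm hxy)).symm
  have := card_le_degree_of_isUniversal hB hx
  have := card_le_degree_of_isUniversal hB hy
  exact hH hxy (by omega)

theorem eq_top_of_adj (hH : IsDegreeSumClosed H m) (hB : ∀ b ∈ B, H.IsUniversal b)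
    (hm : m ≤ 2 * #B + 1) {x y : V} (hx : x ∉ B) (hy : y ∉ B) (hxy : H.Adj x y) : H = ⊤ := by
  classical
  have hxdeg : #B + 1 ≤ H.degree x := by
    have hsub : insert y B ⊆ H.neighborFinset x := insert_subset
      ((H.mem_neighborFinset x y).2 hxy) fun b hb =>
        (H.mem_neighborFinset x b).2 (hB b hb (ne_of_mem_of_not_mem hb hx)).symm
    simpa [card_insert_of_notMem hy] using card_le_card hsub
  have hxuniv : H.IsUniversal x := by
    intro w hxw
    by_cases hw : w ∈ B
    · exact (hB w hw hxw.symm).symm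
    · have := card_le_degree_of_isUniversal hB hw
      exact hH hxw (by omega)
  refine hH.eq_top (B := insert x B) (forall_mem_insert _ _ _ |>.2 ⟨hxuniv, hB⟩) ?_
  rw [card_insert_of_notMem hx]
  omega

end IsDegreeSumClosed

/-- The walk alternates `x, b₁, a₁, b₂, a₂, …` until the `a`s are used up, then runs through the
remaining `b`s to `y`. -/
theorem exists_walk_of_isUniversal {bs as : List V} {x y : V} (hB : ∀ b ∈ bs, H.IsUniversal b)
    (hlen : as.length < bs.length) (hnd : (x :: y :: (as ++ bs)).Nodup) :
    ∃ p : H.Walk x y, p.support.Perm (x :: y :: (as ++ bs)) := by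
  induction bs generalizing as x with
  | nil => simp at hlen
  | cons b bs ih =>
    have hb := hB b (by simp)
    have hxb : H.Adj x b := (hb (by grind)).symm
    have hby : H.Adj b y := hb (by grind)
    cases as with
    | nil =>
      cases bs with
      | nil => exact ⟨.cons hxb (.cons hby .nil), (List.Perm.swap y b []).cons x⟩
      | cons b' bs =>
        obtain ⟨p, hp⟩ := ih (as := []) (x := b) (by grind) (by simp) (by grind)
        exact ⟨.cons hxb p, (hp.trans (.swap y b _)).cons x⟩
    | cons a as =>
      have hba : H.Adj b a := hb (by grind)
      obtain ⟨p, hp⟩ := ih (as := as) (x := a) (by grind) (by grind) (by grind)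
      refine ⟨.cons hxb (.cons hba p), ?_⟩
      classical
      refine List.perm_iff_count.2 fun w => ?_
      have := hp.count_eq w
      simp only [Walk.support_cons, List.count_cons, List.count_append] at this ⊢
      omega

theorem exists_isHamiltonian_of_isUniversal [Fintype V] [DecidableEq V] {B : Finset V}
    (hB : ∀ b ∈ B, H.IsUniversal b) (hcard : Fintype.card V ≤ 2 * #B + 1) {x y : V}
    (hxy : x ≠ y) (hx : x ∉ B) (hy : y ∉ B) : ∃ p : H.Walk x y, p.IsHamiltonian := by
  set A := ({x, y} ∪ B)ᶜ with hA
  have hAB : #A + 2 + #B = Fintype.card V := by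
    rw [hA, ← card_compl_add_card ({x, y} ∪ B), card_union_of_disjoint (by simp [hx, hy]),
      card_pair hxy, add_assoc]
  have hnd : (x :: y :: (A.toList ++ B.toList)).Nodup := by
    simp [List.nodup_append', nodup_toList, List.disjoint_left, hxy, hx, hy, hA]
  obtain ⟨p, hp⟩ := exists_walk_of_isUniversal (bs := B.toList) (by simpa using hB)
    (by simp only [length_toList]; omega) hnd
  refine ⟨p, fun w => ?_⟩
  rw [hp.count_eq]
  refine List.count_eq_one_of_mem hnd ?_
  simp only [hA, List.mem_cons, List.mem_append, mem_toList, mem_compl, mem_union, mem_insert,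
    mem_singleton]
  tauto

end Universal

section Ore

variable [Fintype V] [DecidableEq V] {G : SimpleGraph V} [DecidableRel G.Adj] {B : Finset V}

theorem exists_isHamiltonian_of_card_lt_degree_add_degree
    (hB : ∀ b ∈ B, ∀ w, b ≠ w → Fintype.card V < G.degree b + G.degree w)
    (hcard : Fintype.card V ≤ 2 * #B + 1) {x y : V} (hxy : x ≠ y) (hx : x ∉ B) (hy : y ∉ B) :
    ∃ p : G.Walk x y, p.IsHamiltonian := by
  obtain ⟨H, _, hGH, hH, hlift⟩ := exists_isDegreeSumClosed_supergraph G
  have hBH := hH.isUniversal_of_le hGH hB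
  exact hlift x y (exists_isHamiltonian_of_isUniversal hBH hcard hxy hx hy)

theorem exists_isHamiltonian_of_card_lt_degree_add_degree_of_adj
    (hB : ∀ b ∈ B, ∀ w, b ≠ w → Fintype.card V < G.degree b + G.degree w)
    (hcard : Fintype.card V ≤ 2 * #B) {x y : V} (hx : x ∉ B) (hy : y ∉ B) (hxy : G.Adj x y)
    {u v : V} (huv : u ≠ v) : ∃ p : G.Walk u v, p.IsHamiltonian := by
  obtain ⟨H, _, hGH, hH, hlift⟩ := exists_isDegreeSumClosed_supergraph G
  have hBH := hH.isUniversal_of_le hGH hB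
  have hHtop : H = ⊤ := hH.eq_top_of_adj hBH (by omega) hx hy (hGH hxy)
  have hn : 3 ≤ Fintype.card V := by
    have := card_le_card (subset_univ ({x, y} ∪ B))
    rw [card_union_of_disjoint (by simp [hx, hy]), card_pair hxy.ne, card_univ] at this
    omega
  refine hlift u v (exists_isHamiltonian_of_isUniversal (B := {u, v}ᶜ) ?_ ?_ huv ?_ ?_)
  · simp [hHtop, IsUniversal]
  · rw [card_compl, card_pair huv]
    omega
  all_goals simp

end Ore

theorem hamilton_path_exactly_half_large_degrees_general [Fintype V] [DecidableEq V]
    (G : SimpleGraph V) [DecidableRel G.Adj] {k : ℕ} (hV : Fintype.card V ≤ 2 * k)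
    (hδ : k ≤ G.minDegree) (hlarge : k ≤ #{v | k + 1 ≤ G.degree v}) :
    (∀ x y, G.degree x = k → G.degree y = k → G.Adj x y →
      ∀ u v, u ≠ v → ∃ p : G.Walk u v, p.IsHamiltonian) ∧
    (∀ x y, G.degree x = k → G.degree y = k → x ≠ y → ∃ p : G.Walk x y, p.IsHamiltonian) := by
  have hsum : ∀ b ∈ ({v | k + 1 ≤ G.degree v} : Finset V), ∀ w, b ≠ w →
      Fintype.card V < G.degree b + G.degree w := by
    intro b hb w _
    have hw := hδ.trans (G.minDegree_le_degree w)
    rw [mem_filter_univ] at hb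
    omega
  have hsmall : ∀ x, G.degree x = k → x ∉ ({v | k + 1 ≤ G.degree v} : Finset V) := by
    intro x hx
    simp [hx]
  exact ⟨fun x y hx hy hxy _ _ =>
      exists_isHamiltonian_of_card_lt_degree_add_degree_of_adj hsum (by omega) (hsmall x hx)
        (hsmall y hy) hxy,
    fun x y hx hy hxy => exists_isHamiltonian_of_card_lt_degree_add_degree hsum (by omega) hxy
      (hsmall x hx) (hsmall y hy)⟩

/-- **Lemma (part 2).** Let `n ≥ 3` be even and `G` an `n`-vertex graph with
`δ(G) ≥ n/2`. Suppose exactly `n/2` vertices have degree at least `n/2 + 1`,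
and some pair of vertices admits no Hamilton path between them. Then
`V₁ = {v : deg(v) = n/2}` is independent, and any two distinct vertices of
`V₁` are joined by a Hamilton path. -/
theorem hamilton_path_exactly_half_large_degrees (n : ℕ) (hn : 3 ≤ n) (hne : Even n)
    (G : SimpleGraph (Fin n)) [DecidableRel G.Adj]
    (hδ : n / 2 ≤ G.minDegree)
    (hexact : (Finset.univ.filter (fun v => n / 2 + 1 ≤ G.degree v)).card = n / 2)
    (hnopath : ∃ u v : Fin n, u ≠ v ∧ ¬ ∃ p : G.Walk u v, p.IsHamiltonian) :
    (∀ x y : Fin n, G.degree x = n / 2 → G.degree y = n / 2 → ¬ G.Adj x y) ∧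
    (∀ x y : Fin n, G.degree x = n / 2 → G.degree y = n / 2 → x ≠ y →
      ∃ p : G.Walk x y, p.IsHamiltonian) := by
  obtain ⟨u, v, huv, hno⟩ := hnopath
  have h := hamilton_path_exactly_half_large_degrees_general G (k := n / 2)
    (by rw [Fintype.card_fin, Nat.two_mul_div_two_of_even hne]) hδ hexact.ge
  exact ⟨fun x y hx hy hxy => hno (h.1 x y hx hy hxy u v huv), h.2⟩
end

section
/- Let n ≥ 4 be an integer. Then the unique-Ramsey number of Hamilton paths satisfies r_u(n, P_n) > n/4. Equivalently, for every positive integer r with r ≤ n/4 and every edge-coloring of the complete graph K_n with r colors, there exists a Hamilton path of K_n in which no color occurs exactly once. -/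
/-!
Among the linear forests `F` in which every colour that occurs occurs exactly twice, choose one with
as many edges as possible and, subject to that, with as many *settled* colours as possible: colours
occurring in `F` on edges that touch no edge of another colour, and missing colours of *spare* edges
between two isolated vertices of `F`. By maximality, a missing colour never occurs twice on a path
through `F`. Outside the ends of one spare edge per missing settled colour, it also *spoils* at most
one isolated vertex `z`, where spoiling means joining `z` to an isolated vertex or a leaf of `F`:
two spoiled vertices `z`, `z'` would have to be joined to the same leaf `y`, and exchanging the
colour class of the edge of `F` at `y` for `zy`, `z'y` would settle one more colour.

If `k` of the `r` colours occur in `F`, then `F` covers at most `4k` vertices, so that with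
`n ≥ 4r` at least `n - 4k - 3(r - k) ≥ r - k` isolated vertices are unspoiled and can be set aside.
A path through `F` and all the other vertices has at most one edge of each of the `r - k` missing
colours, and each such edge can be destroyed by inserting one of the vertices set aside. In the
resulting Hamilton path every colour is one of `F`, hence occurs at least twice.
-/

namespace UniqueRamsey

open Finset

/-! ### Edges of a path given as a list of vertices -/

section PathEdges

variable {V : Type*} {e f : Sym2 V} {v y : V} {l p q : List V}

/-- The edges, in order, of the path that visits the vertices of `l` one after the other. Working
with lists rather than with `SimpleGraph.Walk` makes cutting and splicing paths easy;
`SimpleGraph.Walk.edges_eq_zipWith_support` translates back. -/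
def pathEdges (l : List V) : List (Sym2 V) :=
  List.zipWith (s(·, ·)) l l.tail

@[simp]
theorem pathEdges_nil : pathEdges ([] : List V) = [] := rfl

@[simp]
theorem pathEdges_singleton (a : V) : pathEdges [a] = [] := rfl

@[simp]
theorem pathEdges_cons_cons (a b : V) (l : List V) :
    pathEdges (a :: b :: l) = s(a, b) :: pathEdges (b :: l) := rfl

theorem mem_pathEdges_iff : e ∈ pathEdges l ↔ ∃ a b, [a, b] <:+: l ∧ e = s(a, b) := by
  induction l with
  | nil => simp
  | cons x l ih =>
    cases l with
    | nil => simp [List.infix_cons_iff]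
    | cons y l =>
      rw [pathEdges_cons_cons, List.mem_cons, ih]
      constructor
      · rintro (rfl | ⟨a, b, hab, rfl⟩)
        · exact ⟨x, y, ⟨[], l, rfl⟩, rfl⟩
        · exact ⟨a, b, List.infix_cons hab, rfl⟩
      · rintro ⟨a, b, hab, rfl⟩
        rcases List.infix_cons_iff.1 hab with hpre | hinf
        · simp only [List.cons_prefix_cons] at hpre
          exact .inl (by rw [hpre.1, hpre.2.1])
        · exact .inr ⟨a, b, hinf, rfl⟩

theorem mem_pathEdges_of_isInfix (hpl : p <:+: l) (he : e ∈ pathEdges p) : e ∈ pathEdges l := by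
  obtain ⟨a, b, hab, rfl⟩ := mem_pathEdges_iff.1 he
  exact mem_pathEdges_iff.2 ⟨a, b, hab.trans hpl, rfl⟩

theorem mem_of_mem_pathEdges (he : e ∈ pathEdges l) (hv : v ∈ e) : v ∈ l := by
  obtain ⟨a, b, hab, rfl⟩ := mem_pathEdges_iff.1 he
  exact hab.subset (by simpa using hv)

theorem not_isDiag_of_mem_pathEdges (hl : l.Nodup) (he : e ∈ pathEdges l) : ¬ e.IsDiag := by
  obtain ⟨a, b, hab, rfl⟩ := mem_pathEdges_iff.1 he
  simpa using hl.sublist hab.sublist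

theorem mem_pathEdges_reverse : e ∈ pathEdges l.reverse ↔ e ∈ pathEdges l := by
  suffices ∀ l : List V, e ∈ pathEdges l → e ∈ pathEdges l.reverse from
    ⟨fun he => by simpa using this _ he, this l⟩
  intro l he
  obtain ⟨a, b, hab, rfl⟩ := mem_pathEdges_iff.1 he
  exact mem_pathEdges_iff.2 ⟨b, a, by simpa using List.reverse_infix.2 hab, Sym2.eq_swap⟩

theorem nodup_pathEdges (hl : l.Nodup) : (pathEdges l).Nodup := by
  induction l with
  | nil => simp
  | cons a l ih =>
    cases l with
    | nil => simp
    | cons b l =>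
      rw [List.nodup_cons] at hl
      rw [pathEdges_cons_cons, List.nodup_cons]
      exact ⟨fun he => hl.1 (mem_of_mem_pathEdges he (Sym2.mem_mk_left a b)), ih hl.2⟩

theorem pathEdges_append_cons (p : List V) (y : V) (q : List V) :
    pathEdges (p ++ y :: q) = pathEdges (p ++ [y]) ++ pathEdges (y :: q) := by
  induction p with
  | nil => simp
  | cons a p ih => cases p <;> simp_all

theorem mem_pathEdges_of_cons (he : e ∈ pathEdges (y :: q)) (hy : y ∉ e) : e ∈ pathEdges q := by
  cases q with
  | nil => simp at he
  | cons b q =>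
    rw [pathEdges_cons_cons, List.mem_cons] at he
    exact he.resolve_left (by rintro rfl; simp at hy)

theorem mem_pathEdges_of_concat (he : e ∈ pathEdges (p ++ [y])) (hy : y ∉ e) :
    e ∈ pathEdges p := by
  rw [← mem_pathEdges_reverse] at he ⊢
  exact mem_pathEdges_of_cons (by simpa using he) hy

theorem mem_pathEdges_filter {P : V → Bool} (he : e ∈ pathEdges l) (hP : ∀ v ∈ e, P v) :
    e ∈ pathEdges (l.filter P) := by
  obtain ⟨a, b, hab, rfl⟩ := mem_pathEdges_iff.1 he
  have hfilter : [a, b].filter P = [a, b] := List.filter_eq_self.2 (by simpa using hP)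
  exact mem_pathEdges_iff.2 ⟨a, b, hfilter ▸ hab.filter P, rfl⟩

theorem eq_of_mem_pathEdges_cons (hq : (y :: q).Nodup) (he : e ∈ pathEdges (y :: q)) (hye : y ∈ e)
    (hf : f ∈ pathEdges (y :: q)) (hyf : y ∈ f) : e = f := by
  cases q with
  | nil => simp at he
  | cons b q =>
    have eq_first {g : Sym2 V} (hg : g ∈ pathEdges (y :: b :: q)) (hyg : y ∈ g) : g = s(y, b) := by
      rw [pathEdges_cons_cons, List.mem_cons] at hg
      exact hg.resolve_right fun hg => (List.nodup_cons.1 hq).1 (mem_of_mem_pathEdges hg hyg)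
    rw [eq_first he hye, eq_first hf hyf]

theorem eq_of_mem_pathEdges_concat (hp : (p ++ [y]).Nodup) (he : e ∈ pathEdges (p ++ [y]))
    (hye : y ∈ e) (hf : f ∈ pathEdges (p ++ [y])) (hyf : y ∈ f) : e = f := by
  rw [← mem_pathEdges_reverse, List.reverse_concat] at he hf
  rw [← List.nodup_reverse, List.reverse_concat] at hp
  exact eq_of_mem_pathEdges_cons hp he hye hf hyf

end PathEdges

/-! ### Linear forests -/

section LinearForest

variable {V : Type*} {F G : Finset (Sym2 V)} {e : Sym2 V} {v w y z a b : V}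
  {l p q : List V}

/-- `F` is (the edge set of) a linear forest, that is, a vertex-disjoint union of paths. This is
encoded by saying that a single path of the complete graph runs through all edges of `F`. -/
def IsLinearForest (F : Finset (Sym2 V)) : Prop :=
  ∃ l : List V, l.Nodup ∧ ∀ e ∈ F, e ∈ pathEdges l

theorem isLinearForest_empty : IsLinearForest (∅ : Finset (Sym2 V)) :=
  ⟨[], by simp⟩

theorem IsLinearForest.mono (hG : IsLinearForest G) (h : F ⊆ G) : IsLinearForest F := by
  obtain ⟨l, hl, hGl⟩ := hG
  exact ⟨l, hl, fun e he => hGl e (h he)⟩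

theorem IsLinearForest.not_isDiag (hF : IsLinearForest F) (he : e ∈ F) : ¬ e.IsDiag := by
  obtain ⟨l, hl, hFl⟩ := hF
  exact not_isDiag_of_mem_pathEdges hl (hFl e he)

variable [DecidableEq V]

/-- The number of edges of `F` at the vertex `v`. -/
def degree (F : Finset (Sym2 V)) (v : V) : ℕ := #{e ∈ F | v ∈ e}

theorem degree_eq_zero_iff : degree F v = 0 ↔ ∀ e ∈ F, v ∉ e := by
  simp [degree, filter_eq_empty_iff]

theorem degree_le_one_iff :
    degree F v ≤ 1 ↔ ∀ e ∈ F, v ∈ e → ∀ f ∈ F, v ∈ f → e = f := by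
  simp only [degree, card_le_one, mem_filter, and_imp]

theorem degree_mono (h : F ⊆ G) (v : V) : degree F v ≤ degree G v :=
  card_le_card (filter_subset_filter _ h)

theorem degree_insert_le (e : Sym2 V) (F : Finset (Sym2 V)) (v : V) :
    degree (insert e F) v ≤ degree F v + 1 := by
  rw [degree, degree, filter_insert]
  split_ifs
  · exact card_insert_le _ _
  · exact Nat.le_succ _

theorem degree_insert_of_notMem (h : v ∉ e) : degree (insert e F) v = degree F v := by
  rw [degree, degree, filter_insert, if_neg h]

theorem IsLinearForest.exists_path_avoiding (hF : IsLinearForest F) {S W : Finset V}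
    (hSW : Disjoint S W) (hW : ∀ w ∈ W, degree F w = 0) :
    ∃ l : List V, l.Nodup ∧ (∀ e ∈ F, e ∈ pathEdges l) ∧ (∀ v ∈ S, v ∈ l) ∧ ∀ w ∈ W, w ∉ l := by
  obtain ⟨l, hl, hFl⟩ := hF
  refine ⟨l.filter (· ∉ W) ++ (S \ l.toFinset).toList, ?_, fun e he => ?_, fun v hv => ?_,
    fun w hw => ?_⟩
  · refine (hl.filter _).append (nodup_toList _) fun v hv hv' => ?_
    simp_all
  · refine mem_pathEdges_of_isInfix (List.prefix_append _ _).isInfix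
      (mem_pathEdges_filter (hFl e he) fun v hv => ?_)
    simpa using fun hvW => degree_eq_zero_iff.1 (hW v hvW) e he hv
  · have := disjoint_left.1 hSW hv
    by_cases v ∈ l <;> simp_all
  · have := disjoint_right.1 hSW hw
    simp_all

theorem cut_before_or_after (hF : ∀ e ∈ F, e ∈ pathEdges (p ++ y :: q)) (hy : degree F y ≤ 1) :
    (∀ e ∈ F, e ∈ pathEdges p ∨ e ∈ pathEdges (y :: q)) ∨
      ∀ e ∈ F, e ∈ pathEdges (p ++ [y]) ∨ e ∈ pathEdges q := by
  rw [pathEdges_append_cons] at hF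
  simp only [List.mem_append] at hF
  by_cases hleft : ∃ e₀ ∈ F, y ∈ e₀ ∧ e₀ ∈ pathEdges (p ++ [y])
  · obtain ⟨e₀, he₀, hye₀, he₀p⟩ := hleft
    refine .inr fun e he => ?_
    by_cases hye : y ∈ e
    · exact .inl (degree_le_one_iff.1 hy e he hye e₀ he₀ hye₀ ▸ he₀p)
    · exact (hF e he).imp_right fun h => mem_pathEdges_of_cons h hye
  · push Not at hleft
    exact .inl fun e he => (hF e he).imp_left fun h =>
      mem_pathEdges_of_concat h fun hye => hleft e he hye h

theorem IsLinearForest.insert (hF : IsLinearForest F) (hz : degree F z = 0) (hy : degree F y ≤ 1)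
    (hyz : y ≠ z) : IsLinearForest (insert s(z, y) F) := by
  obtain ⟨l, hl, hFl, hyl, hzl⟩ := hF.exists_path_avoiding (S := {y}) (W := {z}) (by simpa)
    (by simpa)
  obtain ⟨p, q, rfl⟩ := List.append_of_mem (hyl y (mem_singleton_self y))
  have hz_cons : (z :: (p ++ y :: q)).Nodup := List.nodup_cons.2 ⟨hzl z (mem_singleton_self z), hl⟩
  rcases cut_before_or_after hFl hy with hcut | hcut
  · refine ⟨p ++ z :: y :: q, (List.perm_middle.nodup_iff).2 hz_cons, forall_mem_insert _ _ _ |>.2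
      ⟨mem_pathEdges_iff.2 ⟨z, y, ⟨p, q, by simp⟩, rfl⟩, fun e he => ?_⟩⟩
    rcases hcut e he with h | h
    · exact mem_pathEdges_of_isInfix (List.prefix_append _ _).isInfix h
    · exact mem_pathEdges_of_isInfix ⟨p ++ [z], [], by simp⟩ h
  · refine ⟨(p ++ [y]) ++ z :: q, (List.perm_middle.nodup_iff).2 (by simpa using hz_cons),
      forall_mem_insert _ _ _ |>.2
      ⟨mem_pathEdges_iff.2 ⟨y, z, ⟨p, q, by simp⟩, Sym2.eq_swap⟩, fun e he => ?_⟩⟩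
    rcases hcut e he with h | h
    · exact mem_pathEdges_of_isInfix (List.prefix_append _ _).isInfix h
    · exact mem_pathEdges_of_isInfix ⟨(p ++ [y]) ++ [z], [], by simp⟩ h

theorem degree_head_le_one (hq : (y :: q).Nodup)
    (hF : ∀ e ∈ F, y ∈ e → e ∈ pathEdges (y :: q)) : degree F y ≤ 1 :=
  degree_le_one_iff.2 fun e he hye f hf hyf =>
    eq_of_mem_pathEdges_cons hq (hF e he hye) hye (hF f hf hyf) hyf

theorem degree_getLast_le_one (hp : (p ++ [y]).Nodup)
    (hF : ∀ e ∈ F, y ∈ e → e ∈ pathEdges (p ++ [y])) : degree F y ≤ 1 :=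
  degree_le_one_iff.2 fun e he hye f hf hyf =>
    eq_of_mem_pathEdges_concat hp (hF e he hye) hye (hF f hf hyf) hyf

theorem degree_le_one_of_cut (hl : (p ++ a :: b :: q).Nodup)
    (hF : ∀ e ∈ F, e ∈ pathEdges (p ++ [a]) ∨ e ∈ pathEdges (b :: q)) :
    degree F a ≤ 1 ∧ degree F b ≤ 1 := by
  have hl' : ((p ++ [a]) ++ b :: q).Nodup := by simpa using hl
  obtain ⟨hp, hq, hdisj⟩ := List.nodup_append'.1 hl'
  exact ⟨degree_getLast_le_one hp fun e he hae => (hF e he).resolve_right fun h =>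
      hdisj (by simp) (mem_of_mem_pathEdges h hae),
    degree_head_le_one hq fun e he hbe => (hF e he).resolve_left fun h =>
      hdisj (mem_of_mem_pathEdges h hbe) (by simp)⟩

/-- If `w` replaces the bad edge `s(a, b)` by `s(a, w)` and `s(w, b)`, then the new edges are not
bad because `F` has at most one edge at `a` and at `b`. -/
theorem exists_perm_cons_countP_le {bad : Sym2 V → Prop} [DecidablePred bad]
    (hF : ∀ e ∈ F, ¬ bad e) (hl : l.Nodup) (hFl : ∀ e ∈ F, e ∈ pathEdges l) (hwl : w ∉ l)
    (hw : ∀ y ≠ w, degree F y ≤ 1 → ¬ bad s(w, y)) :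
    ∃ l' : List V, l'.Perm (w :: l) ∧ (∀ e ∈ F, e ∈ pathEdges l') ∧
      (pathEdges l').countP bad ≤ (pathEdges l).countP bad - 1 := by
  by_cases hgood : ∀ e ∈ pathEdges l, ¬ bad e
  · refine ⟨w :: l, .refl _,
      fun e he => mem_pathEdges_of_isInfix (List.suffix_cons w l).isInfix (hFl e he), ?_⟩
    suffices ∀ e ∈ pathEdges (w :: l), ¬ bad e by
      rw [List.countP_eq_zero.2 (by simpa using this)]
      exact Nat.zero_le _
    cases l with
    | nil => simp
    | cons y l =>
      have hyw : y ≠ w := by rintro rfl; simp at hwl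
      have hwy := hw y hyw (degree_head_le_one hl fun e he _ => hFl e he)
      simpa [hwy] using hgood
  · push Not at hgood
    obtain ⟨e₀, he₀, hbad⟩ := hgood
    obtain ⟨a, b, ⟨p, q, rfl⟩, rfl⟩ := mem_pathEdges_iff.1 he₀
    simp only [List.append_assoc, List.cons_append, List.nil_append] at *
    have hcut : ∀ e ∈ F, e ∈ pathEdges (p ++ [a]) ∨ e ∈ pathEdges (b :: q) := by
      intro e he
      have hel := hFl e he
      rw [pathEdges_append_cons, pathEdges_cons_cons, List.mem_append, List.mem_cons] at hel
      exact hel.imp_right fun h => h.resolve_left (by rintro rfl; exact hF _ he hbad)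
    obtain ⟨hda, hdb⟩ := degree_le_one_of_cut hl hcut
    have hwa : ¬ bad s(a, w) := by
      rw [Sym2.eq_swap]; exact hw a (by rintro rfl; simp at hwl) hda
    have hwb : ¬ bad s(w, b) := hw b (by rintro rfl; simp at hwl) hdb
    have hnew : pathEdges (p ++ a :: w :: b :: q) =
        pathEdges (p ++ [a]) ++ s(a, w) :: s(w, b) :: pathEdges (b :: q) := by
      rw [pathEdges_append_cons, pathEdges_cons_cons, pathEdges_cons_cons]
    refine ⟨p ++ a :: w :: b :: q, ?_, fun e he => ?_, ?_⟩
    · simpa using List.perm_middle (a := w) (l₁ := p ++ [a]) (l₂ := b :: q)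
    · rw [hnew]
      rcases hcut e he with h | h <;> simp [h]
    · rw [hnew, pathEdges_append_cons p a (b :: q)]
      simp [hwa, hwb, hbad]

theorem exists_perm_append_countP_le {bad : Sym2 V → Prop} [DecidablePred bad]
    (hF : ∀ e ∈ F, ¬ bad e) (hl : l.Nodup) (hFl : ∀ e ∈ F, e ∈ pathEdges l) (W : Finset V)
    (hWl : ∀ w ∈ W, w ∉ l) (hW : ∀ w ∈ W, ∀ y ≠ w, degree F y ≤ 1 → ¬ bad s(w, y)) :
    ∃ l' : List V, l'.Perm (W.toList ++ l) ∧ (∀ e ∈ F, e ∈ pathEdges l') ∧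
      (pathEdges l').countP bad ≤ (pathEdges l).countP bad - #W := by
  induction W using Finset.induction_on with
  | empty => exact ⟨l, by simp, hFl, by simp⟩
  | insert w W hwW ih =>
    rw [forall_mem_insert] at hWl hW
    obtain ⟨l₁, hperm₁, hFl₁, hcount₁⟩ := ih hWl.2 hW.2
    have hl₁ : l₁.Nodup := hperm₁.nodup_iff.2 <| (nodup_toList W).append hl fun v hv hvl =>
      hWl.2 v (mem_toList.1 hv) hvl
    have hwl₁ : w ∉ l₁ := by simp [hperm₁.mem_iff, hwW, hWl.1]
    obtain ⟨l', hperm, hFl', hcount⟩ := exists_perm_cons_countP_le hF hl₁ hFl₁ hwl₁ hW.1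
    refine ⟨l', ?_, hFl', ?_⟩
    · exact hperm.trans <| (hperm₁.cons w).trans ((toList_insert hwW).symm.append_right l)
    · rw [card_insert_of_notMem hwW]
      omega

end LinearForest

/-! ### Paired linear forests -/

section Paired

variable {V C : Type*} [DecidableEq C] {χ : Sym2 V → C} {F : Finset (Sym2 V)} {e f : Sym2 V}
  {l : List V}

/-- A linear forest in which every colour that occurs at all occurs exactly twice. -/
structure IsPairedForest (χ : Sym2 V → C) (F : Finset (Sym2 V)) : Prop where
  isLinearForest : IsLinearForest F
  card_eq_two : ∀ c ∈ F.image χ, #{e ∈ F | χ e = c} = 2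

theorem isPairedForest_empty (χ : Sym2 V → C) : IsPairedForest χ ∅ :=
  ⟨isLinearForest_empty, by simp⟩

theorem IsPairedForest.card_eq (hF : IsPairedForest χ F) : #F = #(F.image χ) * 2 := by
  rw [card_eq_sum_card_image χ F]
  exact sum_const_nat hF.card_eq_two

theorem IsPairedForest.filter_ne (hF : IsPairedForest χ F) (d : C) :
    IsPairedForest χ {e ∈ F | χ e ≠ d} where
  isLinearForest := hF.isLinearForest.mono (filter_subset _ _)
  card_eq_two := by
    simp only [forall_mem_image, mem_filter, and_imp]
    intro e he hed
    rw [← hF.card_eq_two (χ e) (mem_image_of_mem χ he), filter_filter]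
    congr 1
    exact filter_congr fun f _ => and_iff_right_of_imp fun hfe => hfe ▸ hed

theorem IsPairedForest.card_filter_ne_add_two (hF : IsPairedForest χ F) (he : e ∈ F) :
    #{f ∈ F | χ f ≠ χ e} + 2 = #F := by
  rw [← hF.card_eq_two (χ e) (mem_image_of_mem χ he), add_comm]
  exact card_filter_add_card_filter_not _

theorem length_filter_pathEdges_ne_one (hF : IsPairedForest χ F) (hFl : ∀ e ∈ F, e ∈ pathEdges l)
    (hl : ∀ e ∈ pathEdges l, χ e ∈ F.image χ) (c : C) :
    ((pathEdges l).filter (χ · = c)).length ≠ 1 := by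
  classical
  intro hone
  obtain ⟨e, he⟩ := List.exists_mem_of_length_pos (hone ▸ one_pos)
  obtain ⟨hel, rfl⟩ : e ∈ pathEdges l ∧ χ e = c := by simpa using he
  have htwo : #{f ∈ F | χ f = χ e} ≤ #((pathEdges l).filter (χ · = χ e)).toFinset :=
    card_le_card fun f hf => by
      rw [mem_filter] at hf
      simp [hFl f hf.1, hf.2]
  rw [hF.card_eq_two _ (hl e hel)] at htwo
  have := htwo.trans (List.toFinset_card_le _)
  omega

variable [DecidableEq V]

theorem card_insert_pair (he : χ e ∉ F.image χ) (hef : e ≠ f) (hχ : χ f = χ e) :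
    #(insert e (insert f F)) = #F + 2 := by
  have heF : e ∉ F := fun h => he (mem_image_of_mem χ h)
  have hfF : f ∉ F := fun h => he (hχ ▸ mem_image_of_mem χ h)
  rw [card_insert_of_notMem (by simp [hef, heF]), card_insert_of_notMem hfF]

theorem IsPairedForest.insert_pair (hF : IsPairedForest χ F) (he : χ e ∉ F.image χ) (hef : e ≠ f)
    (hχ : χ f = χ e) (hlin : IsLinearForest (insert e (insert f F))) :
    IsPairedForest χ (insert e (insert f F)) where
  isLinearForest := hlin
  card_eq_two c hc := by
    rw [image_insert, image_insert, hχ, insert_idem, mem_insert] at hc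
    by_cases hce : c = χ e
    · have hnone : {g ∈ F | χ g = χ e} = ∅ :=
        filter_eq_empty_iff.2 fun g hg h => he (h ▸ mem_image_of_mem χ hg)
      rw [hce, filter_insert, if_pos rfl, filter_insert, if_pos hχ, hnone]
      exact card_pair hef
    · rw [filter_insert, if_neg (Ne.symm hce), filter_insert, if_neg (hχ.trans_ne (Ne.symm hce))]
      exact hF.card_eq_two c (hc.resolve_left hce)

end Paired

/-! ### Settled colours -/

section Settled

variable {V C : Type*} [DecidableEq V] [DecidableEq C] {χ : Sym2 V → C} {F : Finset (Sym2 V)}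
  {c d : C} {e e₀ f : Sym2 V} {v y z z' : V}

/-- The colour `c` occurs in `F`, and no edge of colour `c` in `F` touches an edge of `F` of another
colour. -/
def IsClean (χ : Sym2 V → C) (F : Finset (Sym2 V)) (c : C) : Prop :=
  c ∈ F.image χ ∧ ∀ e ∈ F, χ e = c → ∀ v ∈ e, degree {f ∈ F | χ f ≠ c} v = 0

/-- An edge joining two vertices isolated in `F` whose colour does not occur in `F`. -/
structure IsSpareEdge (χ : Sym2 V → C) (F : Finset (Sym2 V)) (e : Sym2 V) : Prop where
  not_isDiag : ¬ e.IsDiag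
  notMem_image : χ e ∉ F.image χ
  degree_eq_zero : ∀ v ∈ e, degree F v = 0

/-- The settled colours: those that are clean in `F` or are the colour of a spare edge. Their number
is the secondary quantity maximized by an optimal forest. -/
noncomputable def settledColors [Fintype C] (χ : Sym2 V → C) (F : Finset (Sym2 V)) : Finset C :=
  open Classical in {c | IsClean χ F c ∨ ∃ e, IsSpareEdge χ F e ∧ χ e = c}

theorem mem_settledColors [Fintype C] :
    c ∈ settledColors χ F ↔ IsClean χ F c ∨ ∃ e, IsSpareEdge χ F e ∧ χ e = c := by
  simp [settledColors]

/-- Two edges `s(z, y)`, `s(z', y)` of a common colour not occurring in `F`, where `y` is a leaf of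
`F` lying on the edge `e₀` and `z`, `z'` are isolated in `F`. -/
structure IsCherry (χ : Sym2 V → C) (F : Finset (Sym2 V)) (e₀ : Sym2 V) (y z z' : V) : Prop where
  mem : e₀ ∈ F
  mem_leafEdge : y ∈ e₀
  degree_le_one : degree F y ≤ 1
  degree_left : degree F z = 0
  degree_right : degree F z' = 0
  ne : z ≠ z'
  color_eq : χ s(z', y) = χ s(z, y)
  notMem_image : χ s(z, y) ∉ F.image χ

/-- Exchange the whole colour class of `e₀` for the two edges of the cherry. -/
def cherrySwap (χ : Sym2 V → C) (F : Finset (Sym2 V)) (e₀ : Sym2 V) (y z z' : V) :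
    Finset (Sym2 V) :=
  insert s(z, y) (insert s(z', y) {e ∈ F | χ e ≠ χ e₀})

theorem degree_cherrySwap_eq_zero (hv : degree {e ∈ F | χ e ≠ χ e₀} v = 0) (hvy : v ≠ y)
    (hvz : v ≠ z) (hvz' : v ≠ z') : degree (cherrySwap χ F e₀ y z z') v = 0 := by
  rw [cherrySwap, degree_insert_of_notMem (by simp [hvz, hvy]),
    degree_insert_of_notMem (by simp [hvz', hvy]), hv]

namespace IsCherry

variable (h : IsCherry χ F e₀ y z z')
include h

theorem degree_ne_zero : degree F y ≠ 0 := fun hy =>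
  degree_eq_zero_iff.1 hy e₀ h.mem h.mem_leafEdge

theorem ne_left : y ≠ z := fun hyz => h.degree_ne_zero (hyz ▸ h.degree_left)

theorem ne_right : y ≠ z' := fun hyz => h.degree_ne_zero (hyz ▸ h.degree_right)

theorem edge_ne : s(z, y) ≠ s(z', y) := by
  simpa using ⟨h.ne, fun hzy => absurd hzy h.ne_left.symm⟩

theorem eq_of_mem_leaf (he : e ∈ F) (hy : y ∈ e) : e = e₀ :=
  degree_le_one_iff.1 h.degree_le_one e he hy e₀ h.mem h.mem_leafEdge

theorem degree_filter_leaf : degree {e ∈ F | χ e ≠ χ e₀} y = 0 := by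
  refine degree_eq_zero_iff.2 fun e he hy => ?_
  rw [mem_filter] at he
  exact he.2 (congrArg χ (h.eq_of_mem_leaf he.1 hy))

theorem degree_filter_left : degree {e ∈ F | χ e ≠ χ e₀} z = 0 :=
  Nat.eq_zero_of_le_zero (h.degree_left ▸ degree_mono (filter_subset _ _) z)

theorem degree_filter_right : degree {e ∈ F | χ e ≠ χ e₀} z' = 0 :=
  Nat.eq_zero_of_le_zero (h.degree_right ▸ degree_mono (filter_subset _ _) z')

theorem notMem_image_filter : χ s(z, y) ∉ ({e ∈ F | χ e ≠ χ e₀}).image χ := fun hc =>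
  h.notMem_image (image_subset_image (filter_subset _ _) hc)

theorem isPairedForest_cherrySwap (hF : IsPairedForest χ F) :
    IsPairedForest χ (cherrySwap χ F e₀ y z z') := by
  refine (hF.filter_ne (χ e₀)).insert_pair h.notMem_image_filter h.edge_ne h.color_eq ?_
  have hz : z ∉ s(z', y) := by simp [h.ne, h.ne_left.symm]
  refine ((hF.filter_ne _).isLinearForest.insert h.degree_filter_right
    (h.degree_filter_leaf.trans_le zero_le_one) h.ne_right).insert ?_ ?_ h.ne_left
  · rw [degree_insert_of_notMem hz, h.degree_filter_left]
  · exact (degree_insert_le _ _ _).trans_eq (by rw [h.degree_filter_leaf])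

theorem card_cherrySwap (hF : IsPairedForest χ F) : #(cherrySwap χ F e₀ y z z') = #F := by
  rw [cherrySwap, card_insert_pair h.notMem_image_filter h.edge_ne h.color_eq,
    hF.card_filter_ne_add_two h.mem]

theorem mem_or_of_mem_cherrySwap (he : e ∈ cherrySwap χ F e₀ y z z') :
    (e ∈ F ∧ χ e ≠ χ e₀) ∨
      (χ e = χ s(z, y) ∧ ∀ v ∈ e, degree {f ∈ F | χ f ≠ χ e₀} v = 0) := by
  simp only [cherrySwap, mem_insert, mem_filter] at he
  rcases he with rfl | rfl | he
  · refine .inr ⟨rfl, fun v hv => ?_⟩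
    rcases Sym2.mem_iff.1 hv with rfl | rfl
    exacts [h.degree_filter_left, h.degree_filter_leaf]
  · refine .inr ⟨h.color_eq, fun v hv => ?_⟩
    rcases Sym2.mem_iff.1 hv with rfl | rfl
    exacts [h.degree_filter_right, h.degree_filter_leaf]
  · exact .inl he

theorem eq_or_mem_of_mem_image_cherrySwap (hc : c ∈ (cherrySwap χ F e₀ y z z').image χ) :
    c = χ s(z, y) ∨ (c ∈ F.image χ ∧ c ≠ χ e₀) := by
  obtain ⟨e, he, rfl⟩ := mem_image.1 hc
  exact (h.mem_or_of_mem_cherrySwap he).symm.imp And.left fun he =>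
    ⟨mem_image_of_mem χ he.1, he.2⟩

theorem isClean_cherrySwap_new : IsClean χ (cherrySwap χ F e₀ y z z') (χ s(z, y)) := by
  refine ⟨mem_image_of_mem χ (mem_insert_self _ _), fun e he hec v hv => ?_⟩
  have hsub : {f ∈ cherrySwap χ F e₀ y z z' | χ f ≠ χ s(z, y)} ⊆ {f ∈ F | χ f ≠ χ e₀} := by
    intro f hf
    rw [mem_filter] at hf
    exact mem_filter.2 ((h.mem_or_of_mem_cherrySwap hf.1).resolve_right fun hnew => hf.2 hnew.1)
  rcases h.mem_or_of_mem_cherrySwap he with hold | hnew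
  · exact absurd (hec ▸ mem_image_of_mem χ hold.1) h.notMem_image
  · exact Nat.eq_zero_of_le_zero (hnew.2 v hv ▸ degree_mono hsub v)

theorem isClean_cherrySwap (hd : d ≠ χ e₀) (hclean : IsClean χ F d) :
    IsClean χ (cherrySwap χ F e₀ y z z') d := by
  refine ⟨?_, fun e he hed v hv => degree_eq_zero_iff.2 fun f hf hvf => ?_⟩
  · obtain ⟨e, he, rfl⟩ := mem_image.1 hclean.1
    exact mem_image_of_mem χ (by simp [cherrySwap, he, hd])
  rw [mem_filter] at hf
  rcases h.mem_or_of_mem_cherrySwap he with heF | heNew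
  · rcases h.mem_or_of_mem_cherrySwap hf.1 with hfF | hfNew
    · exact degree_eq_zero_iff.1 (hclean.2 e heF.1 hed v hv) f (mem_filter.2 ⟨hfF.1, hf.2⟩) hvf
    · exact degree_eq_zero_iff.1 (hfNew.2 v hvf) e (mem_filter.2 heF) hv
  · exact h.notMem_image (heNew.1 ▸ hed ▸ hclean.1)

theorem exists_isSpareEdge_cherrySwap (hF : IsPairedForest χ F) (hclean : IsClean χ F (χ e₀)) :
    ∃ f, IsSpareEdge χ (cherrySwap χ F e₀ y z z') f ∧ χ f = χ e₀ := by
  have htwo : 1 < #{f ∈ F | χ f = χ e₀} := by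
    rw [hF.card_eq_two _ hclean.1]
    exact one_lt_two
  obtain ⟨f, hf, hfe₀⟩ := exists_mem_ne htwo e₀
  rw [mem_filter] at hf
  refine ⟨f, ⟨hF.isLinearForest.not_isDiag hf.1, fun himage => ?_, fun v hv => ?_⟩, hf.2⟩
  · rw [hf.2] at himage
    rcases h.eq_or_mem_of_mem_image_cherrySwap himage with heq | hne
    · exact h.notMem_image (heq ▸ hclean.1)
    · exact hne.2 rfl
  · refine degree_cherrySwap_eq_zero (hclean.2 f hf.1 hf.2 v hv) ?_ ?_ ?_ <;> rintro rfl
    · exact hfe₀ (h.eq_of_mem_leaf hf.1 hv)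
    · exact degree_eq_zero_iff.1 h.degree_left f hf.1 hv
    · exact degree_eq_zero_iff.1 h.degree_right f hf.1 hv

theorem isSpareEdge_cherrySwap (he : IsSpareEdge χ F e) (hec : χ e ≠ χ s(z, y)) (hz : z ∉ e)
    (hz' : z' ∉ e) : IsSpareEdge χ (cherrySwap χ F e₀ y z z') e := by
  refine ⟨he.not_isDiag, fun himage => ?_, fun v hv => ?_⟩
  · exact he.notMem_image ((h.eq_or_mem_of_mem_image_cherrySwap himage).resolve_left hec).1
  · have hv0 := he.degree_eq_zero v hv
    refine degree_cherrySwap_eq_zero ?_ ?_ ?_ ?_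
    · exact Nat.eq_zero_of_le_zero (hv0 ▸ degree_mono (filter_subset _ _) v)
    · rintro rfl; exact h.degree_ne_zero hv0
    · rintro rfl; exact hz hv
    · rintro rfl; exact hz' hv

theorem card_settledColors_lt [Fintype C] (hF : IsPairedForest χ F)
    (hnew : ∀ e, IsSpareEdge χ F e → χ e ≠ χ s(z, y))
    (hspare : ∀ e, IsSpareEdge χ F e → ∃ f, IsSpareEdge χ F f ∧ χ f = χ e ∧ z ∉ f ∧ z' ∉ f) :
    #(settledColors χ F) < #(settledColors χ (cherrySwap χ F e₀ y z z')) := by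
  have hnot : χ s(z, y) ∉ settledColors χ F := by
    rw [mem_settledColors]
    rintro (hclean | ⟨e, he, hec⟩)
    exacts [h.notMem_image hclean.1, hnew e he hec]
  refine card_lt_card (ssubset_iff.2 ⟨χ s(z, y), hnot, insert_subset ?_ fun d hd => ?_⟩)
  · exact mem_settledColors.2 (.inl h.isClean_cherrySwap_new)
  · rcases mem_settledColors.1 hd with hclean | ⟨e, he, rfl⟩
    · by_cases hde₀ : d = χ e₀
      · subst hde₀
        exact mem_settledColors.2 (.inr (h.exists_isSpareEdge_cherrySwap hF hclean))
      · exact mem_settledColors.2 (.inl (h.isClean_cherrySwap hde₀ hclean))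
    · obtain ⟨f, hf, hfe, hzf, hz'f⟩ := hspare e he
      exact mem_settledColors.2
        (.inr ⟨f, h.isSpareEdge_cherrySwap hf (hfe ▸ hnew e he) hzf hz'f, hfe⟩)

end IsCherry

end Settled

/-! ### Optimal forests -/

section Optimal

variable {V C : Type*} [DecidableEq V] [Fintype C] [DecidableEq C] {χ : Sym2 V → C}
  {F G : Finset (Sym2 V)} {e f : Sym2 V} {c : C} {z z' : V} {E : Finset V} {l : List V}

/-- A paired forest with the maximum number of edges and, subject to that, with the maximum number
of settled colours. -/
def IsOptimal (χ : Sym2 V → C) (F : Finset (Sym2 V)) : Prop :=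
  MaximalFor (IsPairedForest χ) (fun F => toLex (#F, #(settledColors χ F))) F

theorem exists_isOptimal [Finite V] (χ : Sym2 V → C) : ∃ F, IsOptimal χ F :=
  Set.Finite.exists_maximalFor _ {F | IsPairedForest χ F} (Set.toFinite _)
    ⟨∅, isPairedForest_empty χ⟩

namespace IsOptimal

variable (hF : IsOptimal χ F)
include hF

theorem isPairedForest : IsPairedForest χ F := hF.1

theorem card_lt_or_card_settledColors_le (hG : IsPairedForest χ G) :
    #G < #F ∨ #G = #F ∧ #(settledColors χ G) ≤ #(settledColors χ F) := by
  simpa [Prod.Lex.toLex_le_toLex] using not_lt.1 (hF.not_gt hG)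

theorem not_isLinearForest_insert_pair (he : χ e ∉ F.image χ) (hef : e ≠ f) (hχ : χ f = χ e) :
    ¬ IsLinearForest (insert e (insert f F)) := fun hlin => by
  have := hF.card_lt_or_card_settledColors_le (hF.isPairedForest.insert_pair he hef hχ hlin)
  have := card_insert_pair he hef hχ
  omega

theorem card_settledColors_cherrySwap_le {e₀ : Sym2 V} {y : V} (h : IsCherry χ F e₀ y z z') :
    #(settledColors χ (cherrySwap χ F e₀ y z z')) ≤ #(settledColors χ F) := by
  have := hF.card_lt_or_card_settledColors_le (h.isPairedForest_cherrySwap hF.isPairedForest)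
  have := h.card_cherrySwap hF.isPairedForest
  omega

end IsOptimal

/-- `z` is isolated in `F` and can be attached to an isolated vertex or a leaf of `F` by an edge of
colour `c`. -/
def Spoils (χ : Sym2 V → C) (F : Finset (Sym2 V)) (c : C) (z : V) : Prop :=
  degree F z = 0 ∧ ∃ y ≠ z, degree F y ≤ 1 ∧ χ s(z, y) = c

namespace IsOptimal

theorem color_ne_of_spoils (hF : IsOptimal χ F) (hf : IsSpareEdge χ F f) (hz : Spoils χ F c z)
    (hzf : z ∉ f) : χ f ≠ c := by
  obtain ⟨hz0, y, hyz, hy, rfl⟩ := hz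
  intro hfc
  refine hF.not_isLinearForest_insert_pair (e := s(z, y)) (hfc ▸ hf.notMem_image)
    (by rintro rfl; simp at hzf) hfc ?_
  have hlin : IsLinearForest (insert f F) := by
    induction f with
    | _ u v =>
      have huv : v ≠ u := by simpa [eq_comm] using hf.not_isDiag
      exact hF.isPairedForest.isLinearForest.insert (hf.degree_eq_zero u (by simp))
        (hf.degree_eq_zero v (by simp) |>.trans_le zero_le_one) huv
  refine hlin.insert (by rw [degree_insert_of_notMem hzf, hz0]) ?_ hyz
  by_cases hyf : y ∈ f
  · exact (degree_insert_le f F y).trans_eq (by rw [hf.degree_eq_zero y hyf])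
  · rwa [degree_insert_of_notMem hyf]

theorem leaf_eq (hF : IsOptimal χ F) {y y' : V} (hc : χ s(z, y) ∉ F.image χ)
    (hχ : χ s(z', y') = χ s(z, y)) (hz : degree F z = 0) (hz' : degree F z' = 0)
    (hy : degree F y ≤ 1) (hy' : degree F y' ≤ 1) (hzz' : z ≠ z') (hyz : y ≠ z) (hyz' : y ≠ z')
    (hy'z : y' ≠ z) (hy'z' : y' ≠ z') : y = y' := by
  by_contra hyy'
  have hze : z ∉ s(z', y') := by simp [hzz', hy'z.symm]
  have hye : y ∉ s(z', y') := by simp [hyy', hyz']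
  refine hF.not_isLinearForest_insert_pair hc
    (ne_of_mem_of_not_mem' (Sym2.mem_mk_left z y) hze) hχ ?_
  refine (hF.isPairedForest.isLinearForest.insert hz' hy' hy'z').insert ?_ ?_ hyz
  · rw [degree_insert_of_notMem hze, hz]
  · rwa [degree_insert_of_notMem hye]

theorem eq_of_spoils (hF : IsOptimal χ F)
    (hE : ∀ e, IsSpareEdge χ F e → ∃ f, IsSpareEdge χ F f ∧ χ f = χ e ∧ ∀ v ∈ f, v ∈ E)
    (hc : c ∉ F.image χ) (hz : Spoils χ F c z) (hz' : Spoils χ F c z') (hzE : z ∉ E)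
    (hz'E : z' ∉ E) : z = z' := by
  by_contra hzz'
  have hspare : ∀ e, IsSpareEdge χ F e → χ e ≠ c := by
    intro e he
    obtain ⟨f, hf, hfe, hfE⟩ := hE e he
    exact hfe ▸ hF.color_ne_of_spoils hf hz fun hzf => hzE (hfE z hzf)
  obtain ⟨hz0, y, hyz, hy, rfl⟩ := hz
  obtain ⟨hz'0, y', hy'z', hy', hχ⟩ := hz'
  have hy0 : degree F y ≠ 0 := fun hy0 => hspare s(z, y)
    ⟨by simpa using hyz.symm, hc, by simp [hz0, hy0]⟩ rfl
  have hy'0 : degree F y' ≠ 0 := fun hy'0 => hspare s(z', y')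
    ⟨by simpa using hy'z'.symm, hχ ▸ hc, by simp [hz'0, hy'0]⟩ hχ
  obtain rfl := hF.leaf_eq hc hχ hz0 hz'0 hy hy' hzz' hyz (fun h => hy0 (h ▸ hz'0))
    (fun h => hy'0 (h ▸ hz0)) hy'z'
  obtain ⟨e₀, he₀, hye₀⟩ : ∃ e ∈ F, y ∈ e := by simpa [degree_eq_zero_iff] using hy0
  have hcherry : IsCherry χ F e₀ y z z' := ⟨he₀, hye₀, hy, hz0, hz'0, hzz', hχ, hc⟩
  refine (hF.card_settledColors_cherrySwap_le hcherry).not_gt <|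
    hcherry.card_settledColors_lt hF.isPairedForest hspare fun e he => ?_
  obtain ⟨f, hf, hfe, hfE⟩ := hE e he
  exact ⟨f, hf, hfe, fun h => hzE (hfE z h), fun h => hz'E (hfE z' h)⟩

theorem countP_notMem_image_le (hF : IsOptimal χ F) (hl : l.Nodup)
    (hFl : ∀ e ∈ F, e ∈ pathEdges l) :
    (pathEdges l).countP (χ · ∉ F.image χ) ≤ #(F.image χ)ᶜ := by
  set B := (pathEdges l).filter (χ · ∉ F.image χ) with hB
  have hBnodup : B.Nodup := (nodup_pathEdges hl).filter _
  rw [List.countP_eq_length_filter, ← hB, ← List.toFinset_card_of_nodup hBnodup]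
  refine card_le_card_of_injOn χ (fun e he => ?_) fun e he f hf hχ => ?_
  · simpa [hB] using (List.mem_filter.1 (List.mem_toFinset.1 he)).2
  · rw [mem_coe, List.mem_toFinset, hB, List.mem_filter, decide_eq_true_iff] at he hf
    by_contra hef
    refine hF.not_isLinearForest_insert_pair he.2 hef hχ.symm ⟨l, hl, ?_⟩
    simpa [he.1, hf.1] using hFl

end IsOptimal

theorem exists_cover_isSpareEdge (χ : Sym2 V → C) (F : Finset (Sym2 V)) :
    ∃ E : Finset V, #E ≤ #(F.image χ)ᶜ * 2 ∧
      ∀ e, IsSpareEdge χ F e → ∃ f, IsSpareEdge χ F f ∧ χ f = χ e ∧ ∀ v ∈ f, v ∈ E := by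
  have hcolor : ∀ c, ∃ E : Finset V, #E ≤ 2 ∧ ∀ e, IsSpareEdge χ F e → χ e = c →
      ∃ f, IsSpareEdge χ F f ∧ χ f = c ∧ ∀ v ∈ f, v ∈ E := by
    intro c
    by_cases hc : ∃ f, IsSpareEdge χ F f ∧ χ f = c
    · obtain ⟨f, hf, hfc⟩ := hc
      exact ⟨f.toFinset, (f.card_toFinset_of_not_isDiag hf.not_isDiag).le,
        fun _ _ _ => ⟨f, hf, hfc, fun v hv => Sym2.mem_toFinset.2 hv⟩⟩
    · exact ⟨∅, by simp, fun e he hec => absurd ⟨e, he, hec⟩ hc⟩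
  choose E hEcard hE using hcolor
  refine ⟨(F.image χ)ᶜ.biUnion E, card_biUnion_le_card_mul _ _ _ fun c _ => hEcard c,
    fun e he => ?_⟩
  obtain ⟨f, hf, hfe, hfE⟩ := hE (χ e) e he rfl
  exact ⟨f, hf, hfe, fun v hv =>
    mem_biUnion.2 ⟨χ e, mem_compl.2 he.notMem_image, hfE v hv⟩⟩

/-- `w` is isolated in `F`, and attaching it to an isolated vertex or a leaf of `F` never creates an
edge of a colour that does not occur in `F`. -/
def IsFlexible (χ : Sym2 V → C) (F : Finset (Sym2 V)) (w : V) : Prop :=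
  degree F w = 0 ∧ ∀ y ≠ w, degree F y ≤ 1 → χ s(w, y) ∈ F.image χ

theorem card_biUnion_toFinset_le (F : Finset (Sym2 V)) : #(F.biUnion Sym2.toFinset) ≤ #F * 2 :=
  card_biUnion_le_card_mul _ _ _ fun e _ => by
    rw [e.card_toFinset]
    split_ifs <;> simp

theorem IsOptimal.exists_card_compl_image_le [Fintype V] (hF : IsOptimal χ F)
    (hcard : 4 * Fintype.card C ≤ Fintype.card V) :
    ∃ W : Finset V, #(F.image χ)ᶜ ≤ #W ∧ ∀ w ∈ W, IsFlexible χ F w := by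
  classical
  obtain ⟨E, hEcard, hE⟩ := exists_cover_isSpareEdge χ F
  let spoiled := (F.image χ)ᶜ.biUnion fun c => ({z | Spoils χ F c z ∧ z ∉ E} : Finset V)
  have hspoiled : #spoiled ≤ #(F.image χ)ᶜ * 1 := by
    refine card_biUnion_le_card_mul _ _ _ fun c hc => card_le_one.2 ?_
    simp only [mem_filter_univ]
    exact fun z hz z' hz' => hF.eq_of_spoils hE (mem_compl.1 hc) hz.1 hz'.1 hz.2 hz'.2
  let bad := F.biUnion Sym2.toFinset ∪ E ∪ spoiled
  refine ⟨badᶜ, ?_, fun w hw => ?_⟩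
  · have hbad : #bad ≤ #(F.biUnion Sym2.toFinset) + #E + #spoiled :=
      (card_union_le _ _).trans (Nat.add_le_add_right (card_union_le _ _) _)
    have hforest := card_biUnion_toFinset_le F
    have hFcard := hF.isPairedForest.card_eq
    have hV := card_add_card_compl bad
    have hC := card_add_card_compl (F.image χ)
    omega
  · simp only [bad, mem_compl, mem_union, not_or, mem_biUnion, not_exists, not_and,
      Sym2.mem_toFinset] at hw
    obtain ⟨⟨hwF, hwE⟩, hwspoiled⟩ := hw
    have hw0 : degree F w = 0 := degree_eq_zero_iff.2 hwF
    refine ⟨hw0, fun y hyw hy => by_contra fun hc => hwspoiled ?_⟩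
    exact mem_biUnion.2 ⟨χ s(w, y), mem_compl.2 hc, by
      simpa using ⟨⟨hw0, y, hyw, hy, rfl⟩, hwE⟩⟩

theorem IsOptimal.exists_spanning_path [Fintype V] (hF : IsOptimal χ F)
    (hcard : 4 * Fintype.card C ≤ Fintype.card V) :
    ∃ l : List V, l.Nodup ∧ (∀ v, v ∈ l) ∧ (∀ e ∈ F, e ∈ pathEdges l) ∧
      ∀ e ∈ pathEdges l, χ e ∈ F.image χ := by
  obtain ⟨W, hWcard, hW⟩ := hF.exists_card_compl_image_le hcard
  obtain ⟨l, hl, hFl, hWcl, hWl⟩ := hF.isPairedForest.isLinearForest.exists_path_avoiding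
    disjoint_compl_left fun w hw => (hW w hw).1
  obtain ⟨l', hperm, hFl', hcount⟩ := exists_perm_append_countP_le (bad := (χ · ∉ F.image χ))
    (fun e he => not_not.2 (mem_image_of_mem χ he)) hl hFl W hWl
    fun w hw y hyw hy => not_not.2 ((hW w hw).2 y hyw hy)
  have hnodup : (W.toList ++ l).Nodup :=
    (nodup_toList W).append hl fun v hv => hWl v (mem_toList.1 hv)
  refine ⟨l', hperm.nodup_iff.2 hnodup, fun v => ?_, hFl', ?_⟩
  · rw [hperm.mem_iff, List.mem_append, mem_toList]
    exact (em (v ∈ W)).imp_right fun hv => hWcl v (mem_compl.2 hv)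
  · have hzero : (pathEdges l').countP (χ · ∉ F.image χ) = 0 := by
      have := hF.countP_notMem_image_le hl hFl
      omega
    simpa using List.countP_eq_zero.1 hzero

end Optimal

theorem exists_spanning_path_length_filter_ne_one {V C : Type*} [Fintype V] [Fintype C]
    [DecidableEq C] (χ : Sym2 V → C) (hcard : 4 * Fintype.card C ≤ Fintype.card V) :
    ∃ l : List V, l.Nodup ∧ (∀ v, v ∈ l) ∧ ∀ c, ((pathEdges l).filter (χ · = c)).length ≠ 1 := by
  classical
  obtain ⟨F, hF⟩ := exists_isOptimal χ
  obtain ⟨l, hl, hmem, hFl, hcolors⟩ := hF.exists_spanning_path hcard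
  exact ⟨l, hl, hmem, length_filter_pathEdges_ne_one hF.isPairedForest hFl hcolors⟩

end UniqueRamsey

/-- **Theorem.** For `n ≥ 4`, the unique-Ramsey number of Hamilton paths
satisfies `r_u(n, P_n) > n/4`: for every `r` with `1 ≤ r` and `r ≤ n/4`
(i.e. `4r ≤ n`) and every `r`-coloring of the edges of `K_n`, there is a
Hamilton path in which no color occurs exactly once. -/
theorem unique_ramsey_hamilton_path_lower (n r : ℕ) (hn : 4 ≤ n) (hr : 1 ≤ r)
    (hrn : 4 * r ≤ n) (χ : Sym2 (Fin n) → Fin r) :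
    ∃ (u v : Fin n) (w : (⊤ : SimpleGraph (Fin n)).Walk u v), w.IsHamiltonian ∧
      ∀ c : Fin r, (w.edges.filter (fun e => χ e = c)).length ≠ 1 := by
  obtain ⟨l, hl, hmem, hcolor⟩ :=
    UniqueRamsey.exists_spanning_path_length_filter_ne_one χ (by simpa using hrn)
  have hne : l ≠ [] := List.ne_nil_of_mem (hmem ⟨0, by omega⟩)
  let w := SimpleGraph.Walk.ofSupport (G := ⊤) l hne (List.Pairwise.isChain hl)
  have hsupport : w.support = l := SimpleGraph.Walk.support_ofSupport hne _
  have hpath : w.IsPath := .mk' (by rwa [hsupport])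
  have hedges : w.edges = UniqueRamsey.pathEdges l := by
    rw [SimpleGraph.Walk.edges_eq_zipWith_support, hsupport, UniqueRamsey.pathEdges]
  exact ⟨_, _, w, hpath.isHamiltonian_of_mem (by rwa [hsupport]), by rwa [hedges]⟩
end
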